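/- Let w be a smooth function on an open interval I ⊆ ℝ and let ψ_0 be a nowhere-vanishing smooth function on I satisfying (L1) and (L2) with w and a parameter α; define the sequence ψ_n by the recursion. Then for every N ≥ 2, the identity τ_N[0,…,N−2,N+1] − τ_N[0,…,N−3,N−1,N] = (−w/2 + 2N·z)·τ_N holds on I. -/

import Mathlib

/-- The `N×N` determinant with `(i,j)` entry `ψ_{i-1+c_j}` (rows/columns indexed from 0),
i.e. the Hankel determinant of the sequence `ψ` with column offsets `c`.
`tauShift ψ N (fun j => j)` is the Hankel determinant `τ_N` itself. -/
noncomputable def tauShift (ψ : ℕ → ℝ → ℝ) (N : ℕ) (c : Fin N → ℕ) (z : ℝ) : ℝ :=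
  Matrix.det (Matrix.of fun i j : Fin N => ψ ((i : ℕ) + c j) z)

/-!
The coefficient `c = w / (2ψ₀)` is a second solution of (L2): by (L1) the Wronskian of `ψ₀` and `c`
is constant. Hence everything takes place in a differential ring. There the generating series
`F = ∑ ψₙ Xⁿ` satisfies the Riccati equation `F = ψ₀ + X (F' + c X F²)`, and therefore also a
Riccati equation in the variable `X`: the defect `R` of the latter obeys `R = X (R' + 2cXF R)`,
which forces `R = 0`. Comparing coefficients expresses `ψₙ₊₂` through `ψ₀, …, ψₙ` without
derivatives. For the Hankel matrix `H` and its shift `H₂ = (ψ_{i+j+2})` this recursion reads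
`H₂ = a H + B H + (B H)ᵀ - c h hᵀ` with `h` the first column of `H`. The difference of the two
shifted determinants is the sum of the determinants obtained from `H` by moving one column two steps
forward, that is, the trace of `adj(H) H₂`, which is now a multiple of `det H`.
-/

section Convolution

variable {A : Type*} [CommSemiring A]

/-- The coefficient of `X ^ n` in `X * F ^ 2`, where `F` is the generating series of `p`; it is the
sum in the recursion defining the sequence `ψ`. -/
def selfConvolution (p : ℕ → A) (n : ℕ) : A :=
  ∑ k ∈ Finset.range n, p k * p (n - 1 - k)

lemma map_selfConvolution {F B : Type*} [CommSemiring B] [FunLike F A B] [RingHomClass F A B]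
    (f : F) (p : ℕ → A) (n : ℕ) : f (selfConvolution p n) = selfConvolution (f ∘ p) n := by
  simp [selfConvolution]

lemma selfConvolution_add (p : ℕ → A) (i j : ℕ) :
    selfConvolution p (i + j) = ∑ k ∈ Finset.range i, p (i - 1 - k) * p (k + j) +
      ∑ k ∈ Finset.range j, p (j - 1 - k) * p (k + i) := by
  rw [selfConvolution, Finset.sum_range_add, ← Finset.sum_range_reflect]
  congr 1 <;> refine Finset.sum_congr rfl fun k hk => ?_
  · congr 2; grind
  · rw [mul_comm]; congr 2 <;> grind

lemma selfConvolution_add_add_one (p : ℕ → A) (i j : ℕ) :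
    selfConvolution p (i + j + 1) + p i * p j =
      ∑ k ∈ Finset.range (i + 1), p (i - k) * p (k + j) +
        ∑ k ∈ Finset.range (j + 1), p (j - k) * p (k + i) := by
  rw [Nat.add_right_comm, selfConvolution_add, Finset.sum_range_succ' _ j]
  simp only [Nat.add_sub_cancel, Nat.sub_zero, zero_add, Nat.sub_sub, Nat.add_comm 1,
    Nat.add_assoc]
  ring

open PowerSeries

lemma coeff_mk_sq (p : ℕ → A) (n : ℕ) :
    coeff n (mk p ^ 2) = selfConvolution p (n + 1) := by
  rw [pow_two, coeff_mul, Finset.Nat.sum_antidiagonal_eq_sum_range_succ_mk]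
  simp [selfConvolution]

lemma coeff_X_mul_mk_sq (p : ℕ → A) (n : ℕ) :
    coeff n (X * mk p ^ 2) = selfConvolution p n := by
  cases n with
  | zero => simp [selfConvolution]
  | succ n => rw [coeff_succ_X_mul, coeff_mk_sq]

end Convolution

section CoeffwiseDerivation

open PowerSeries

variable {S A : Type*} [CommSemiring S] [CommRing A] [Algebra S A] (δ : Derivation S A A)

/-- The extension of a derivation of `A` to `A⟦X⟧` that acts on each coefficient, so that `X` is a
constant. -/
noncomputable def coeffwiseDerivation : Derivation S A⟦X⟧ A⟦X⟧ :=
  Derivation.mk'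
    { toFun := fun F => mk fun n => δ (coeff n F)
      map_add' := fun F G => by ext; simp
      map_smul' := fun s F => by ext; simp }
    fun F G => by
      ext n
      simp only [smul_eq_mul, map_add, mul_comm G, LinearMap.coe_mk, AddHom.coe_mk, coeff_mk,
        coeff_mul, map_sum, Derivation.leibniz, Finset.sum_add_distrib]
      simp only [mul_comm]

lemma coeff_coeffwiseDerivation (F : A⟦X⟧) (n : ℕ) :
    coeff n (coeffwiseDerivation δ F) = δ (coeff n F) := by
  simp [coeffwiseDerivation]

lemma coeffwiseDerivation_C (a : A) : coeffwiseDerivation δ (C a) = C (δ a) := by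
  ext n
  simp only [coeff_coeffwiseDerivation, coeff_C]
  split_ifs <;> simp

lemma coeffwiseDerivation_X : coeffwiseDerivation δ (X : A⟦X⟧) = 0 := by
  ext n
  simp only [coeff_coeffwiseDerivation, coeff_X]
  split_ifs <;> simp

lemma coeffwiseDerivation_derivative (F : A⟦X⟧) :
    coeffwiseDerivation δ (derivative A F) = derivative A (coeffwiseDerivation δ F) := by
  ext n
  rw [coeff_coeffwiseDerivation, coeff_derivative, coeff_derivative, coeff_coeffwiseDerivation,
    ← Nat.cast_succ, Derivation.leibniz, Derivation.map_natCast]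
  simp [mul_comm]

lemma eq_zero_of_eq_X_mul_derivation_add {D : Derivation S A⟦X⟧ A⟦X⟧} (hX : D X = 0)
    {R G : A⟦X⟧} (hR : R = X * (D R + G * R)) : R = 0 := by
  have X_pow_dvd (n : ℕ) : X ^ n ∣ R := by
    induction n with
    | zero => simp
    | succ n ih =>
      obtain ⟨Q, rfl⟩ := ih
      refine ⟨D Q + G * Q, ?_⟩
      conv_lhs => rw [hR]
      rw [D.leibniz, D.leibniz_pow, hX]
      simp only [smul_eq_mul]
      ring
  ext n
  exact X_pow_dvd_iff.mp (X_pow_dvd (n + 1)) n n.lt_succ_self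

end CoeffwiseDerivation

section Hierarchy

open PowerSeries

variable {S A : Type*} [CommSemiring S] [CommRing A] [Algebra S A] {δ : Derivation S A A}
  {c z : A} {p : ℕ → A}

lemma riccati_coeffwiseDerivation (hp : ∀ n, p (n + 1) = δ (p n) + c * selfConvolution p n) :
    mk p = C (p 0) + X * (coeffwiseDerivation δ (mk p) + C c * (X * mk p ^ 2)) := by
  ext n
  cases n with
  | zero => simp
  | succ n =>
    rw [map_add, coeff_succ_X_mul, map_add, coeff_C_mul, coeff_X_mul_mk_sq,
      coeff_coeffwiseDerivation]
    simp [hp]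

lemma riccati_derivative_of_riccati_coeffwiseDerivation {F : A⟦X⟧} {p₀ : A} (hz : δ z = 1)
    (hp₀ : δ (δ p₀) = 2 * (z - c * p₀) * p₀) (hc : δ (δ c) = 2 * (z - c * p₀) * c)
    (hF : F = C p₀ + X * (coeffwiseDerivation δ F + C c * (X * F ^ 2))) :
    F = C p₀ + X * C (δ p₀) + X ^ 2 * (C (2 * (z - c * p₀)) * F +
      2 * (X * derivative A (X * F)) + C c * F ^ 2 - C (δ c) * (X * F ^ 2)) := by
  rw [← sub_eq_zero]
  refine eq_zero_of_eq_X_mul_derivation_add (G := 2 * C c * X * F) (coeffwiseDerivation_X δ) ?_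
  have hF' := congrArg (derivative A) hF
  have h2 : (C (2 : A) : A⟦X⟧) = 2 := map_ofNat C 2
  have hD2 : coeffwiseDerivation δ 2 = 0 := (coeffwiseDerivation δ).map_natCast 2
  simp only [map_add, map_sub, map_mul, pow_two, Derivation.leibniz, smul_eq_mul, derivative_C,
    derivative_X, coeffwiseDerivation_C, coeffwiseDerivation_X, coeffwiseDerivation_derivative,
    Derivation.map_one_eq_zero, hz, hp₀, hc, h2, hD2, map_one] at hF' ⊢
  linear_combination (1 + (2 * C c * C p₀ - 2 * C z) * X ^ 2 +
    2 * F * (C (δ c) * X ^ 3 - C c * X ^ 2)) * hF - 2 * X ^ 4 * hF'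

lemma hierarchy_add_two (hz : δ z = 1)
    (hp₀ : δ (δ (p 0)) = 2 * (z - c * p 0) * p 0) (hc : δ (δ c) = 2 * (z - c * p 0) * c)
    (hp : ∀ n, p (n + 1) = δ (p n) + c * selfConvolution p n) (n : ℕ) :
    p (n + 2) = 2 * (z - c * p 0) * p n + 2 * n * p (n - 1)
      + c * selfConvolution p (n + 1) - δ c * selfConvolution p n := by
  have hF := congrArg (coeff (n + 2)) <|
    riccati_derivative_of_riccati_coeffwiseDerivation hz hp₀ hc (riccati_coeffwiseDerivation hp)
  have coeff_two_mul (m : ℕ) (G : A⟦X⟧) : coeff m (2 * G) = 2 * coeff m G := by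
    rw [← map_ofNat C 2, coeff_C_mul]
  have coeff_X_mul_derivative : coeff n (X * derivative A (X * mk p)) = n * p (n - 1) := by
    cases n with
    | zero => simp
    | succ n => rw [coeff_succ_X_mul, coeff_derivative, coeff_succ_X_mul]; simp [mul_comm]
  simp only [map_add, map_sub, coeff_mk, coeff_C, coeff_succ_X_mul, coeff_X_pow_mul, coeff_C_mul,
    coeff_two_mul, coeff_X_mul_derivative, coeff_mk_sq, coeff_X_mul_mk_sq] at hF
  simpa [mul_assoc] using hF

lemma wronskian_eq_of_first_order {f w α : A} (hf : IsLeftRegular (2 * f)) (hw : w = 2 * c * f)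
    (hL1 : 2 * w * δ f - δ w * f - 4 * α * f = 0) : c * δ f - δ c * f = 2 * α := by
  have hδw : δ w = 2 * (c * δ f + f * δ c) := by
    have hδ2 : δ 2 = 0 := δ.map_natCast 2
    simp only [hw, Derivation.leibniz, hδ2, smul_eq_mul]
    ring
  apply hf
  linear_combination hL1 + f * hδw - 2 * δ f * hw

lemma deriv_deriv_eq_of_wronskian {f g a : A} (hf : IsLeftRegular f)
    (hW : δ (g * δ f - δ g * f) = 0) (hδf : δ (δ f) = a * f) : δ (δ g) = a * g := by
  simp only [map_sub, Derivation.leibniz, smul_eq_mul] at hW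
  apply hf
  linear_combination -hW + g * hδf

end Hierarchy

section Hankel

open Matrix

variable {R : Type*} {n : ℕ}

/-- The Hankel matrix of order `n` of the sequence `p`. -/
def hankel (n : ℕ) (p : ℕ → R) : Matrix (Fin n) (Fin n) R :=
  of fun i j => p (i + j)

lemma hankel_transpose (p : ℕ → R) : (hankel n p)ᵀ = hankel n p := by
  ext i j
  simp [hankel, add_comm]

variable [CommRing R]

/-- The Hankel determinant `τ_n[c_1, …, c_n]` of the sequence `p` with column offsets `c`. -/
def hankelDet (p : ℕ → R) (c : Fin n → ℕ) : R :=
  det (of fun i j : Fin n => p (i + c j))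

lemma map_hankelDet {F S : Type*} [CommRing S] [FunLike F R S] [RingHomClass F R S] (f : F)
    (p : ℕ → R) (c : Fin n → ℕ) : f (hankelDet p c) = hankelDet (f ∘ p) c :=
  RingHom.map_det (f : R →+* S) _

lemma hankelDet_eq_zero_of_eq {p : ℕ → R} {c : Fin n → ℕ} {i j : Fin n} (hij : i ≠ j)
    (hc : c i = c j) : hankelDet p c = 0 :=
  det_zero_of_column_eq hij fun k => by simp only [of_apply, hc]

lemma hankelDet_comp_swap (p : ℕ → R) (c : Fin n → ℕ) {i j : Fin n} (hij : i ≠ j) :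
    hankelDet p (c ∘ Equiv.swap i j) = -hankelDet p c := by
  refine (det_permute' (Equiv.swap i j) (of fun a b : Fin n => p (a + c b))).trans ?_
  simp [Equiv.Perm.sign_swap hij, hankelDet]

lemma sum_hankelDet_update_add_two (p : ℕ → R) (m : ℕ) :
    ∑ j : Fin (m + 2), hankelDet p (Function.update (fun k : Fin (m + 2) => (k : ℕ)) j (j + 2)) =
      hankelDet p (fun j : Fin (m + 2) => if (j : ℕ) = m + 1 then m + 3 else j) -
        hankelDet p (fun j : Fin (m + 2) => if m ≤ (j : ℕ) then (j : ℕ) + 1 else j) := by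
  have early (j : Fin m) : hankelDet p (Function.update (fun k : Fin (m + 2) => (k : ℕ))
      j.castSucc.castSucc (j.castSucc.castSucc + 2)) = 0 := by
    refine hankelDet_eq_zero_of_eq (i := j.castSucc.castSucc) (j := ⟨j + 2, by lia⟩) ?_ ?_ <;>
      simp [Fin.ext_iff]
  have penultimate : hankelDet p (Function.update (fun k : Fin (m + 2) => (k : ℕ))
      (Fin.last m).castSucc (m + 2)) =
        -hankelDet p (fun j : Fin (m + 2) => if m ≤ (j : ℕ) then (j : ℕ) + 1 else j) := by
    have hne : (Fin.last m).castSucc ≠ Fin.last (m + 1) := by simp [Fin.ext_iff]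
    rw [← hankelDet_comp_swap p _ hne]
    congr 1
    ext j
    simp only [Function.update_apply, Function.comp_apply, Equiv.swap_apply_def, Fin.ext_iff]
    split_ifs <;> simp_all; lia
  have last : Function.update (fun k : Fin (m + 2) => (k : ℕ)) (Fin.last (m + 1)) (m + 3) =
      fun j : Fin (m + 2) => if (j : ℕ) = m + 1 then m + 3 else j := by
    ext j
    simp [Function.update_apply, Fin.ext_iff]
  rw [Fin.sum_univ_castSucc, Fin.sum_univ_castSucc, Finset.sum_eq_zero fun j _ => early j]
  simp only [Fin.val_castSucc, Fin.val_last, penultimate, add_assoc, Nat.reduceAdd, last]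
  ring

lemma sum_det_updateCol_col (H M : Matrix (Fin n) (Fin n) R) :
    ∑ j, (H.updateCol j (M.col j)).det = (H.adjugate * M).trace := by
  simp only [← cramer_apply, cramer_eq_adjugate_mulVec, trace, diag, mul_apply, mulVec, dotProduct,
    col_apply]

lemma sum_hankelDet_update_add (p : ℕ → R) (s : ℕ) :
    ∑ j : Fin n, hankelDet p (Function.update (fun k : Fin n => (k : ℕ)) j (j + s)) =
      ((hankel n p).adjugate * hankel n (fun m => p (m + s))).trace := by
  rw [← sum_det_updateCol_col]
  refine Finset.sum_congr rfl fun j _ => congrArg det ?_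
  ext i k
  by_cases hk : k = j <;> simp [hankel, hk, add_assoc]

lemma trace_adjugate_mul_mul_self (H B : Matrix (Fin n) (Fin n) R) :
    (H.adjugate * (B * H)).trace = B.trace * H.det := by
  rw [trace_mul_comm, Matrix.mul_assoc, mul_adjugate]
  simp [mul_comm]

lemma trace_adjugate_mul_self_mul (H B : Matrix (Fin n) (Fin n) R) :
    (H.adjugate * (H * B)).trace = B.trace * H.det := by
  rw [← Matrix.mul_assoc, adjugate_mul]
  simp [mul_comm]

lemma trace_adjugate_mul_vecMulVec (H : Matrix (Fin n) (Fin n) R) (k : Fin n) :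
    (H.adjugate * vecMulVec (H.col k) (H.row k)).trace = H k k * H.det := by
  have hcol : H.adjugate *ᵥ H.col k = Pi.single k H.det := by
    rw [← mulVec_single_one, mulVec_mulVec, adjugate_mul, smul_mulVec, one_mulVec]
    simp [← Pi.single_smul]
  rw [mul_vecMulVec, hcol, trace_vecMulVec, single_dotProduct, mul_comm, row_apply]

/-- The lower triangular Toeplitz matrix whose first column is `q`. -/
def lowerToeplitz (n : ℕ) (q : ℕ → R) : Matrix (Fin n) (Fin n) R :=
  of fun i k => if k ≤ i then q (i - k) else 0

/-- The sequence `0, q 0, q 1, …`, which turns `lowerToeplitz` strictly lower triangular. -/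
def delay (q : ℕ → R) (k : ℕ) : R :=
  if k = 0 then 0 else q (k - 1)

variable (R n) in
/-- The transpose of the matrix of the derivative on polynomials of degree less than `n`, in the
basis of monomials. -/
def derivMatrix : Matrix (Fin n) (Fin n) R :=
  of fun i k => if (k : ℕ) + 1 = i then (i : R) else 0

lemma trace_lowerToeplitz (q : ℕ → R) : (lowerToeplitz n q).trace = n * q 0 := by
  simp [lowerToeplitz, trace]

lemma trace_derivMatrix : (derivMatrix R n).trace = 0 := by
  simp [derivMatrix, trace]

lemma lowerToeplitz_mul_hankel_apply (q p : ℕ → R) (i j : Fin n) :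
    (lowerToeplitz n q * hankel n p) i j =
      ∑ k ∈ Finset.range (i + 1), q (i - k) * p (k + j) := by
  simp only [mul_apply, lowerToeplitz, hankel, of_apply, ite_mul, zero_mul, Fin.le_def]
  rw [Fin.sum_univ_eq_sum_range (fun k => if k ≤ i then q (i - k) * p (k + j) else 0),
    ← Finset.sum_filter]
  refine Finset.sum_congr ?_ fun _ _ => rfl
  grind

lemma lowerToeplitz_delay_mul_hankel_apply (q p : ℕ → R) (i j : Fin n) :
    (lowerToeplitz n (delay q) * hankel n p) i j =
      ∑ k ∈ Finset.range i, q (i - 1 - k) * p (k + j) := by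
  rw [lowerToeplitz_mul_hankel_apply, Finset.sum_range_succ]
  simp only [delay, Nat.sub_self, if_true, zero_mul, add_zero]
  refine Finset.sum_congr rfl fun k hk => ?_
  rw [if_neg (by grind), Nat.sub_right_comm]

lemma derivMatrix_mul_hankel_apply (p : ℕ → R) (i j : Fin n) :
    (derivMatrix R n * hankel n p) i j = (i : ℕ) * p (i + j - 1) := by
  simp only [mul_apply, derivMatrix, hankel, of_apply, ite_mul, zero_mul]
  obtain ⟨i | i, hi⟩ := i
  · simp
  · rw [Fintype.sum_eq_single ⟨i, by lia⟩ (by grind)]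
    simp [Nat.add_right_comm]

/-- The matrix `B` that expresses the recursion of `hierarchy_add_two` on Hankel matrices, as
`H₂ = a H + B H + (B H)ᵀ - c h hᵀ`. -/
def recursionMatrix (n : ℕ) (p : ℕ → R) (c d : R) : Matrix (Fin n) (Fin n) R :=
  (2 : R) • derivMatrix R n + c • lowerToeplitz n p - d • lowerToeplitz n (delay p)

lemma trace_recursionMatrix (p : ℕ → R) (c d : R) :
    (recursionMatrix n p c d).trace = n * (c * p 0) := by
  simp only [recursionMatrix, trace_sub, trace_add, trace_smul, trace_derivMatrix,
    trace_lowerToeplitz, delay, if_true, smul_eq_mul]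
  ring

lemma recursionMatrix_mul_hankel_add_transpose_apply (p : ℕ → R) (c d : R) (i j : Fin n) :
    (recursionMatrix n p c d * hankel n p + (recursionMatrix n p c d * hankel n p)ᵀ) i j =
      2 * (i + j : ℕ) * p (i + j - 1) + c * (selfConvolution p (i + j + 1) + p i * p j) -
        d * selfConvolution p (i + j) := by
  rw [selfConvolution_add_add_one, selfConvolution_add]
  simp only [recursionMatrix, Matrix.sub_mul, Matrix.add_mul, Matrix.smul_mul, Matrix.add_apply,
    transpose_apply, Matrix.sub_apply, Matrix.smul_apply, derivMatrix_mul_hankel_apply,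
    lowerToeplitz_delay_mul_hankel_apply, smul_eq_mul, add_comm (j : ℕ) i]
  simp only [lowerToeplitz_mul_hankel_apply, Nat.cast_add]
  ring

lemma hankel_add_two_eq [NeZero n] {p : ℕ → R} {a c d : R}
    (hp : ∀ k : ℕ, p (k + 2) = a * p k + 2 * k * p (k - 1)
      + c * selfConvolution p (k + 1) - d * selfConvolution p k) :
    hankel n (fun k => p (k + 2)) = a • hankel n p +
      (recursionMatrix n p c d * hankel n p + (recursionMatrix n p c d * hankel n p)ᵀ) -
        c • vecMulVec ((hankel n p).col 0) ((hankel n p).row 0) := by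
  ext i j
  rw [Matrix.sub_apply, Matrix.add_apply, recursionMatrix_mul_hankel_add_transpose_apply]
  simp only [Matrix.smul_apply, vecMulVec_apply, col_apply, row_apply, hankel, of_apply, hp,
    smul_eq_mul, Fin.coe_ofNat_eq_mod, Nat.zero_mod, add_zero, zero_add]
  ring

lemma trace_adjugate_mul_hankel_add_two [NeZero n] {p : ℕ → R} {a c d : R}
    (hp : ∀ k : ℕ, p (k + 2) = a * p k + 2 * k * p (k - 1)
      + c * selfConvolution p (k + 1) - d * selfConvolution p k) :
    ((hankel n p).adjugate * hankel n (fun k => p (k + 2))).trace =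
      (n * a + (2 * n - 1) * (c * p 0)) * (hankel n p).det := by
  have hscalar : ((hankel n p).adjugate * hankel n p).trace = n * (hankel n p).det := by
    simp [adjugate_mul, mul_comm]
  have hcorner : hankel n p 0 0 = p 0 := by simp [hankel]
  rw [hankel_add_two_eq hp, Matrix.mul_sub, Matrix.mul_add, Matrix.mul_add, Matrix.mul_smul,
    Matrix.mul_smul, trace_sub, trace_add, trace_add, trace_smul, trace_smul,
    trace_adjugate_mul_vecMulVec, trace_adjugate_mul_mul_self, transpose_mul, hankel_transpose,
    trace_adjugate_mul_self_mul, trace_transpose, trace_recursionMatrix, hscalar, hcorner]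
  simp only [smul_eq_mul]
  ring

lemma hankelDet_offset_diff {p : ℕ → R} {a c d : R} {N : ℕ} (hN : 2 ≤ N)
    (hp : ∀ k : ℕ, p (k + 2) = a * p k + 2 * k * p (k - 1)
      + c * selfConvolution p (k + 1) - d * selfConvolution p k) :
    hankelDet p (fun j : Fin N => if (j : ℕ) = N - 1 then N + 1 else j) -
        hankelDet p (fun j : Fin N => if N - 2 ≤ (j : ℕ) then (j : ℕ) + 1 else j) =
      (N * a + (2 * N - 1) * (c * p 0)) * hankelDet p (fun j : Fin N => (j : ℕ)) := by
  obtain ⟨m, rfl⟩ := Nat.exists_eq_add_of_le' hN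
  exact (sum_hankelDet_update_add_two p m).symm.trans <|
    (sum_hankelDet_update_add p 2).trans (trace_adjugate_mul_hankel_add_two hp)

lemma hankelDet_offset_diff_of_hierarchy {S : Type*} [CommSemiring S] [Algebra S R]
    {δ : Derivation S R R} {c z w α : R} {p : ℕ → R} (hz : δ z = 1) (hα : δ α = 0)
    (hp₀ : IsLeftRegular (2 * p 0)) (hw : w = 2 * c * p 0)
    (hL1 : 2 * w * δ (p 0) - δ w * p 0 - 4 * α * p 0 = 0)
    (hL2 : δ (δ (p 0)) + (w - 2 * z) * p 0 = 0)
    (hp : ∀ k, p (k + 1) = δ (p k) + c * selfConvolution p k) {N : ℕ} (hN : 2 ≤ N) :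
    hankelDet p (fun j : Fin N => if (j : ℕ) = N - 1 then N + 1 else j) -
        hankelDet p (fun j : Fin N => if N - 2 ≤ (j : ℕ) then (j : ℕ) + 1 else j) =
      (2 * N * z - c * p 0) * hankelDet p (fun j : Fin N => (j : ℕ)) := by
  have hp₀'' : δ (δ (p 0)) = 2 * (z - c * p 0) * p 0 := by
    linear_combination hL2 - p 0 * hw
  have hWronskian : δ (c * δ (p 0) - δ c * p 0) = 0 := by
    have hδ2 : δ 2 = 0 := δ.map_natCast 2
    simp [wronskian_eq_of_first_order hp₀ hw hL1, hα, hδ2]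
  have hc'' : δ (δ c) = 2 * (z - c * p 0) * c :=
    deriv_deriv_eq_of_wronskian hp₀.of_mul hWronskian hp₀''
  rw [hankelDet_offset_diff hN (hierarchy_add_two hz hp₀'' hc'' hp)]
  ring

end Hankel

section Smooth

open scoped ContDiff
open TopologicalSpace

variable {𝕜 : Type*} [NontriviallyNormedField 𝕜] {U : Opens 𝕜}

/-- The algebra of smooth functions on an open set `U`, encoded as those functions on the subtype
`U` that have an extension to `𝕜` which is smooth on `U`. -/
def smoothFunctions (U : Opens 𝕜) : Subalgebra 𝕜 (U → 𝕜) where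
  carrier := {f | ∃ g : 𝕜 → 𝕜, ContDiffOn 𝕜 ∞ g U ∧ f = fun x : U => g x}
  mul_mem' := by
    rintro _ _ ⟨f, hf, rfl⟩ ⟨g, hg, rfl⟩
    exact ⟨f * g, hf.mul hg, rfl⟩
  add_mem' := by
    rintro _ _ ⟨f, hf, rfl⟩ ⟨g, hg, rfl⟩
    exact ⟨f + g, hf.add hg, rfl⟩
  algebraMap_mem' a := ⟨fun _ => a, contDiffOn_const, rfl⟩

namespace smoothFunctions

/-- The element of `smoothFunctions U` given by a function on `𝕜` that is smooth on `U`. -/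
def ofContDiffOn (f : 𝕜 → 𝕜) (hf : ContDiffOn 𝕜 ∞ f U) : smoothFunctions U :=
  ⟨fun x => f x, f, hf, rfl⟩

/-- A function on `𝕜` that restricts to `F` and is smooth on `U`. -/
noncomputable def extension (F : smoothFunctions U) : 𝕜 → 𝕜 := F.2.choose

lemma contDiffOn_extension (F : smoothFunctions U) : ContDiffOn 𝕜 ∞ (extension F) U :=
  F.2.choose_spec.1

lemma extension_apply (F : smoothFunctions U) (x : U) : extension F x = F.1 x :=
  (congrFun F.2.choose_spec.2 x).symm

/-- The derivative of a smooth function, computed from a smooth extension: on the open set `U` the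
choice does not matter. -/
noncomputable def derivFun (F : smoothFunctions U) : smoothFunctions U :=
  ofContDiffOn (deriv (extension F)) ((contDiffOn_extension F).deriv_of_isOpen U.isOpen le_rfl)

lemma hasDerivAt_extension (F : smoothFunctions U) (x : U) :
    HasDerivAt (extension F) ((derivFun F).1 x) x :=
  (((contDiffOn_extension F).differentiableOn (by simp)).differentiableAt
    (U.isOpen.mem_nhds x.2)).hasDerivAt

lemma derivFun_apply_of_hasDerivAt {F : smoothFunctions U} {f : 𝕜 → 𝕜} {f' : 𝕜} {x : U}
    (hf : ∀ y : U, f y = F.1 y) (hf' : HasDerivAt f f' x) : (derivFun F).1 x = f' := by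
  have hEqOn : Set.EqOn (extension F) f U := fun y hy =>
    (extension_apply F ⟨y, hy⟩).trans (hf ⟨y, hy⟩).symm
  exact (hEqOn.deriv U.isOpen x.2).trans hf'.deriv

/-- Differentiation as a derivation of the algebra of smooth functions. -/
noncomputable def derivation (U : Opens 𝕜) :
    Derivation 𝕜 (smoothFunctions U) (smoothFunctions U) :=
  Derivation.mk'
    { toFun := derivFun
      map_add' F G := Subtype.ext <| funext fun x =>
        derivFun_apply_of_hasDerivAt (fun y => by simp [extension_apply])
          ((hasDerivAt_extension F x).add (hasDerivAt_extension G x))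
      map_smul' a F := Subtype.ext <| funext fun x =>
        derivFun_apply_of_hasDerivAt (fun y => by simp [extension_apply])
          ((hasDerivAt_extension F x).const_smul a) }
    fun F G => Subtype.ext <| funext fun x => by
      refine (derivFun_apply_of_hasDerivAt (fun y => by simp [extension_apply])
        ((hasDerivAt_extension F x).mul (hasDerivAt_extension G x))).trans ?_
      simp [extension_apply, add_comm, mul_comm]

@[simp]
lemma derivation_ofContDiffOn {f : 𝕜 → 𝕜} (hf : ContDiffOn 𝕜 ∞ f U) :
    derivation U (ofContDiffOn f hf) =
      ofContDiffOn (deriv f) (hf.deriv_of_isOpen U.isOpen le_rfl) :=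
  Subtype.ext <| funext fun x =>
    derivFun_apply_of_hasDerivAt (F := ofContDiffOn f hf) (fun _ => rfl)
      ((hf.differentiableOn (by simp)).differentiableAt (U.isOpen.mem_nhds x.2)).hasDerivAt

/-- Evaluation at a point of `U`. -/
def eval (x : U) : smoothFunctions U →ₐ[𝕜] 𝕜 :=
  (Pi.evalAlgHom 𝕜 (fun _ : U => 𝕜) x).comp (smoothFunctions U).val

@[simp]
lemma eval_ofContDiffOn {f : 𝕜 → 𝕜} (hf : ContDiffOn 𝕜 ∞ f U) (x : U) :
    eval x (ofContDiffOn f hf) = f x := rfl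

lemma ext_eval {F G : smoothFunctions U} (h : ∀ x, eval x F = eval x G) : F = G :=
  Subtype.ext (funext h)

lemma isLeftRegular_of_forall_eval_ne_zero {F : smoothFunctions U} (hF : ∀ x, eval x F ≠ 0) :
    IsLeftRegular F := fun G H hGH =>
  ext_eval fun x => mul_left_cancel₀ (hF x) <| by simpa using congrArg (eval x) hGH

end smoothFunctions

lemma contDiffOn_hierarchy {I : Set 𝕜} (hI : IsOpen I) {c : 𝕜 → 𝕜} {ψ : ℕ → 𝕜 → 𝕜}
    (hc : ContDiffOn 𝕜 ∞ c I) (hψ₀ : ContDiffOn 𝕜 ∞ (ψ 0) I)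
    (hψ : ∀ n, ∀ x ∈ I, ψ (n + 1) x = deriv (ψ n) x + c x * selfConvolution (ψ · x) n) (n : ℕ) :
    ContDiffOn 𝕜 ∞ (ψ n) I := by
  induction n using Nat.strong_induction_on with
  | _ n ih =>
    cases n with
    | zero => exact hψ₀
    | succ n =>
      have hderiv : ContDiffOn 𝕜 ∞ (deriv (ψ n)) I :=
        (ih n n.lt_succ_self).deriv_of_isOpen hI le_rfl
      have hsum : ContDiffOn 𝕜 ∞ (fun x => selfConvolution (ψ · x) n) I :=
        ContDiffOn.sum fun k hk => (ih k (by grind)).mul (ih (n - 1 - k) (by grind))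
      exact (hderiv.add (hc.mul hsum)).congr (hψ n)

open smoothFunctions in
theorem tau_shift_second_deriv_diff_general [NeZero (2 : 𝕜)] {I : Set 𝕜} (hI : IsOpen I)
    {w ψ₀ : 𝕜 → 𝕜} (hw : ContDiffOn 𝕜 ∞ w I) (hψ₀ : ContDiffOn 𝕜 ∞ ψ₀ I)
    (hψ₀_ne : ∀ z ∈ I, ψ₀ z ≠ 0) {α : 𝕜}
    (hL1 : ∀ z ∈ I, 2 * w z * deriv ψ₀ z - deriv w z * ψ₀ z - 4 * α * ψ₀ z = 0)
    (hL2 : ∀ z ∈ I, deriv (deriv ψ₀) z + (w z - 2 * z) * ψ₀ z = 0)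
    {ψ : ℕ → 𝕜 → 𝕜} (hψ_zero : ψ 0 = ψ₀)
    (hψ : ∀ n, ∀ z ∈ I, ψ (n + 1) z =
      deriv (ψ n) z + (w z / (2 * ψ₀ z)) * selfConvolution (ψ · z) n)
    {N : ℕ} (hN : 2 ≤ N) {z : 𝕜} (hz : z ∈ I) :
    hankelDet (ψ · z) (fun j : Fin N => if (j : ℕ) = N - 1 then N + 1 else j) -
        hankelDet (ψ · z) (fun j : Fin N => if N - 2 ≤ (j : ℕ) then (j : ℕ) + 1 else j) =
      (-(w z) / 2 + 2 * N * z) * hankelDet (ψ · z) (fun j : Fin N => (j : ℕ)) := by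
  subst hψ_zero
  have two_mul_ne (x : 𝕜) (hx : x ∈ I) : 2 * ψ 0 x ≠ 0 := mul_ne_zero two_ne_zero (hψ₀_ne x hx)
  have hc : ContDiffOn 𝕜 ∞ (fun x => w x / (2 * ψ 0 x)) I :=
    hw.div (contDiffOn_const.mul hψ₀) two_mul_ne
  have w_eq (x : 𝕜) (hx : x ∈ I) : w x = 2 * (w x / (2 * ψ 0 x)) * ψ 0 x := by
    field_simp [hψ₀_ne x hx]
  let U : Opens 𝕜 := ⟨I, hI⟩
  let Ψ (n : ℕ) : smoothFunctions U := ofContDiffOn (ψ n) (contDiffOn_hierarchy hI hc hψ₀ hψ n)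
  have eval_Ψ (x : U) : eval x ∘ Ψ = (ψ · x) := rfl
  have hdiff := hankelDet_offset_diff_of_hierarchy (δ := derivation U) (p := Ψ)
    (c := ofContDiffOn _ hc) (z := ofContDiffOn _ contDiffOn_id) (w := ofContDiffOn w hw)
    (α := algebraMap 𝕜 _ α) (ext_eval fun x => by simp) (by simp)
    (isLeftRegular_of_forall_eval_ne_zero fun x => by simpa [Ψ, map_ofNat] using two_mul_ne x x.2)
    (ext_eval fun x => by simpa [Ψ, map_ofNat] using w_eq x x.2)
    (ext_eval fun x => by simpa [Ψ, map_ofNat] using hL1 x x.2)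
    (ext_eval fun x => by simpa [Ψ, map_ofNat] using hL2 x x.2)
    (fun k => ext_eval fun x => by simpa [Ψ, map_selfConvolution, eval_Ψ] using hψ k x x.2) hN
  have coefficient_eq : -(w z) / 2 + 2 * N * z = 2 * N * z - w z / (2 * ψ 0 z) * ψ 0 z := by
    field_simp [hψ₀_ne z hz]
    ring
  simpa [map_hankelDet, eval_Ψ, Ψ, map_ofNat, coefficient_eq] using congrArg (eval ⟨z, hz⟩) hdiff

end Smooth

/-- Differential formula (A.3): `τ_N[0,…,N-2,N+1] - τ_N[0,…,N-3,N-1,N] = (-w/2 + 2Nz) τ_N`. -/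
theorem tau_shift_second_deriv_diff
    (I : Set ℝ) (hIopen : IsOpen I) (hIconn : I.OrdConnected)
    (w ψ0 : ℝ → ℝ)
    (hw_smooth : ContDiffOn ℝ (⊤ : ℕ∞) w I)
    (hψ0_smooth : ContDiffOn ℝ (⊤ : ℕ∞) ψ0 I)
    (hψ0_ne : ∀ z ∈ I, ψ0 z ≠ 0)
    (α : ℝ)
    (hL1 : ∀ z ∈ I, 2 * w z * deriv ψ0 z - deriv w z * ψ0 z - 4 * α * ψ0 z = 0)
    (hL2 : ∀ z ∈ I, deriv (deriv ψ0) z + (w z - 2 * z) * ψ0 z = 0)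
    (ψ : ℕ → ℝ → ℝ)
    (hψ_zero : ψ 0 = ψ0)
    (hψ_rec : ∀ n : ℕ, ∀ z ∈ I, ψ (n + 1) z =
      deriv (ψ n) z + (w z / (2 * ψ0 z)) *
        ∑ k ∈ Finset.range n, ψ k z * ψ (n - 1 - k) z)
    (N : ℕ) (hN : 2 ≤ N) :
    ∀ z ∈ I,
      tauShift ψ N (fun j => if (j : ℕ) = N - 1 then N + 1 else (j : ℕ)) z
        - tauShift ψ N (fun j => if N - 2 ≤ (j : ℕ) then (j : ℕ) + 1 else (j : ℕ)) z
      = (-(w z) / 2 + 2 * (N : ℝ) * z) * tauShift ψ N (fun j => (j : ℕ)) z :=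
  fun _ hz => tau_shift_second_deriv_diff_general hIopen hw_smooth hψ0_smooth hψ0_ne hL1 hL2
    hψ_zero hψ_rec hN hz
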